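/- Suppose P is a proper real-rational n×n transfer matrix that is negative imaginary (NI) without poles at the origin, C is strictly negative imaginary (SNI), and either P(∞) ≥ 0 or C(∞) ≥ 0 (positive semidefinite). If the largest eigenvalue of P(0)C(0) is less than 1 and the largest eigenvalue of P(∞)C(∞) is less than 1, then the positive feedback interconnection [P, C] is stable. -/

import Mathlib

open Matrix Polynomial Filter Topology
open scoped ComplexOrder

noncomputable section

namespace NIControl

/-- Evaluate a real-rational function at a complex point (junk value at poles). -/
def evalC (f : RatFunc ℝ) (s : ℂ) : ℂ :=
  f.eval (algebraMap ℝ ℂ) s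

/-- `s` is a pole of the real-rational function `f`
(the reduced denominator vanishes at `s`). -/
def IsPoleAt (f : RatFunc ℝ) (s : ℂ) : Prop :=
  f.denom.eval₂ (algebraMap ℝ ℂ) s = 0

variable {n : ℕ}

/-- Pointwise evaluation of a real-rational transfer matrix at a complex point. -/
def evalM (G : Matrix (Fin n) (Fin n) (RatFunc ℝ)) (s : ℂ) : Matrix (Fin n) (Fin n) ℂ :=
  Matrix.of fun i j => evalC (G i j) s

/-- Pointwise evaluation of a real-rational transfer matrix at a real point. -/
def evalR (G : Matrix (Fin n) (Fin n) (RatFunc ℝ)) (x : ℝ) : Matrix (Fin n) (Fin n) ℝ :=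
  Matrix.of fun i j => (G i j).eval (RingHom.id ℝ) x

/-- Value at `s = ∞` of a proper real-rational function. -/
def atInfinity (f : RatFunc ℝ) : ℝ :=
  if f.num.degree = f.denom.degree then f.num.leadingCoeff / f.denom.leadingCoeff else 0

/-- The instantaneous gain `G(∞)` of a proper real-rational transfer matrix. -/
def evalInf (G : Matrix (Fin n) (Fin n) (RatFunc ℝ)) : Matrix (Fin n) (Fin n) ℝ :=
  Matrix.of fun i j => atInfinity (G i j)

/-- The matrix `G` has a pole at `s`. -/
def HasPole (G : Matrix (Fin n) (Fin n) (RatFunc ℝ)) (s : ℂ) : Prop :=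
  ∃ i j, IsPoleAt (G i j) s

/-- All entries of `G` are proper rational functions. -/
def Proper (G : Matrix (Fin n) (Fin n) (RatFunc ℝ)) : Prop :=
  ∀ i j, (G i j).num.degree ≤ (G i j).denom.degree

/-- All entries of `G` are strictly proper rational functions. -/
def StrictlyProper (G : Matrix (Fin n) (Fin n) (RatFunc ℝ)) : Prop :=
  ∀ i j, (G i j).num.degree < (G i j).denom.degree

/-- The pole of `G` at the origin (if any) is at most simple. -/
def NoDoubleOriginPole (G : Matrix (Fin n) (Fin n) (RatFunc ℝ)) : Prop :=
  ∀ i j, (G i j).denom.rootMultiplicity 0 ≤ 1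

/-- Membership in `RH∞`: proper and no poles in the closed right-half complex plane. -/
def MemRHinf {m : Type*} [Fintype m] (G : Matrix m m (RatFunc ℝ)) : Prop :=
  (∀ i j, (G i j).num.degree ≤ (G i j).denom.degree) ∧
  ∀ s : ℂ, 0 ≤ s.re → ∀ i j, ¬ IsPoleAt (G i j) s

/-- The point `jω` on the imaginary axis. -/
def jw (ω : ℝ) : ℂ := Complex.I * (ω : ℂ)

/-- The negative-imaginary frequency kernel `j (M − M*)`. -/
def niKer (M : Matrix (Fin n) (Fin n) ℂ) : Matrix (Fin n) (Fin n) ℂ :=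
  Complex.I • (M - Mᴴ)

/-- Negative imaginary (NI) real-rational transfer matrix. -/
def IsNI (G : Matrix (Fin n) (Fin n) (RatFunc ℝ)) : Prop :=
  Proper G ∧
  (∀ s : ℂ, 0 < s.re → ¬ HasPole G s) ∧
  (∀ ω : ℝ, 0 < ω → ¬ HasPole G (jw ω) → (niKer (evalM G (jw ω))).PosSemidef) ∧
  (∀ ω : ℝ, 0 < ω → HasPole G (jw ω) →
    ∃ R : Matrix (Fin n) (Fin n) ℂ, R.PosSemidef ∧
      Tendsto (fun s : ℂ => (s - jw ω) • Complex.I • evalM G s) (𝓝[≠] jw ω) (𝓝 R)) ∧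
  (HasPole G 0 →
    (∀ k : ℕ, 3 ≤ k → Tendsto (fun s : ℂ => s ^ k • evalM G s) (𝓝[≠] 0) (𝓝 0)) ∧
    ∃ R : Matrix (Fin n) (Fin n) ℂ, R.PosSemidef ∧
      Tendsto (fun s : ℂ => s ^ 2 • evalM G s) (𝓝[≠] 0) (𝓝 R))

/-- Strictly negative imaginary (SNI) real-rational transfer matrix. -/
def IsSNI (G : Matrix (Fin n) (Fin n) (RatFunc ℝ)) : Prop :=
  MemRHinf G ∧ ∀ ω : ℝ, 0 < ω → (niKer (evalM G (jw ω))).PosDef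

/-- Positive real (passive) real-rational transfer matrix. -/
def IsPositiveReal (G : Matrix (Fin n) (Fin n) (RatFunc ℝ)) : Prop :=
  MemRHinf G ∧ ∀ ω : ℝ, 0 ≤ ω → (evalM G (jw ω) + (evalM G (jw ω))ᴴ).PosSemidef

/-- Output strictly passive real-rational transfer matrix. -/
def IsOSP (G : Matrix (Fin n) (Fin n) (RatFunc ℝ)) : Prop :=
  MemRHinf G ∧ ∃ ε : ℝ, 0 < ε ∧ ∀ ω : ℝ, 0 ≤ ω →
    (evalM G (jw ω) + (evalM G (jw ω))ᴴ -
      (ε : ℂ) • ((evalM G (jw ω))ᴴ * evalM G (jw ω))).PosSemidef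

/-- Stability of the positive feedback interconnection `[P, C]`:
`[I; C] (I − P C)⁻¹ [I, P] ∈ RH∞`. -/
def FeedbackStable (P C : Matrix (Fin n) (Fin n) (RatFunc ℝ)) : Prop :=
  ((1 : Matrix (Fin n) (Fin n) (RatFunc ℝ)) - P * C).det ≠ 0 ∧
  MemRHinf (Matrix.fromBlocks
    (1 - P * C)⁻¹ ((1 - P * C)⁻¹ * P)
    (C * (1 - P * C)⁻¹) (C * (1 - P * C)⁻¹ * P))

/-- All eigenvalues of the complex matrix `M` are real and less than `c`. -/
def eigsRealAndLT (M : Matrix (Fin n) (Fin n) ℂ) (c : ℝ) : Prop :=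
  ∀ μ ∈ spectrum ℂ M, μ.im = 0 ∧ μ.re < c

/-- The (real) eigenvalues of the real matrix `M` are all real and its largest
eigenvalue is less than `c`. -/
def maxEigLT (M : Matrix (Fin n) (Fin n) ℝ) (c : ℝ) : Prop :=
  eigsRealAndLT (M.map (Complex.ofReal)) c

/-- Loewner order `A ≤ B` on real matrices. -/
def LoewnerLE (A B : Matrix (Fin n) (Fin n) ℝ) : Prop := (B - A).PosSemidef

/-- Strict Loewner order `A < B` on real matrices. -/
def LoewnerLT (A B : Matrix (Fin n) (Fin n) ℝ) : Prop := (B - A).PosDef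

/-! ### Evaluation of rational functions -/

lemma evalC_eq (f : RatFunc ℝ) (s : ℂ) : evalC f s = aeval s f.num / aeval s f.denom := rfl

lemma isPoleAt_iff (f : RatFunc ℝ) (s : ℂ) : IsPoleAt f s ↔ aeval s f.denom = 0 := Iff.rfl

lemma aeval_ne_zero_cofinite (p : ℝ[X]) (hp : p ≠ 0) :
    ∀ᶠ s : ℂ in cofinite, aeval s p ≠ 0 := by
  have h : p.map (algebraMap ℝ ℂ) ≠ 0 :=
    (Polynomial.map_ne_zero_iff (algebraMap ℝ ℂ).injective).2 hp
  have := Polynomial.finite_setOfPred_isRoot h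
  rw [Filter.eventually_cofinite]
  refine this.subset ?_
  intro s hs
  simpa [Polynomial.IsRoot, Polynomial.eval_map_algebraMap] using hs

lemma not_pole_cofinite (f : RatFunc ℝ) : ∀ᶠ s : ℂ in cofinite, ¬ IsPoleAt f s :=
  aeval_ne_zero_cofinite _ f.denom_ne_zero

lemma not_hasPole_cofinite (G : Matrix (Fin n) (Fin n) (RatFunc ℝ)) :
    ∀ᶠ s : ℂ in cofinite, ¬ HasPole G s := by
  have : ∀ᶠ s : ℂ in cofinite, ∀ i j, ¬ IsPoleAt (G i j) s := by
    simp only [Filter.eventually_all]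
    exact fun i j => not_pole_cofinite _
  filter_upwards [this] with s hs
  rintro ⟨i, j, h⟩
  exact hs i j h

lemma evalC_ne_zero_cofinite (f : RatFunc ℝ) (hf : f ≠ 0) :
    ∀ᶠ s : ℂ in cofinite, evalC f s ≠ 0 := by
  filter_upwards [aeval_ne_zero_cofinite _ f.denom_ne_zero,
    aeval_ne_zero_cofinite _ (RatFunc.num_ne_zero hf)] with s h1 h2
  rw [evalC_eq]
  exact div_ne_zero h2 h1

lemma evalC_differentiableAt {f : RatFunc ℝ} {s : ℂ} (h : ¬ IsPoleAt f s) :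
    DifferentiableAt ℂ (evalC f) s := by
  have : evalC f = fun s => aeval s f.num / aeval s f.denom := rfl
  rw [this]
  exact DifferentiableAt.div (Polynomial.differentiable_aeval _ _)
    (Polynomial.differentiable_aeval _ _) h

lemma tendsto_matrix {α : Type*} {l : Filter α} {F : α → Matrix (Fin n) (Fin n) ℂ}
    {A : Matrix (Fin n) (Fin n) ℂ} (h : ∀ i j, Tendsto (fun x => F x i j) l (𝓝 (A i j))) :
    Tendsto F l (𝓝 A) :=
  tendsto_pi_nhds.2 fun i => tendsto_pi_nhds.2 (h i)

lemma evalM_tendsto {G : Matrix (Fin n) (Fin n) (RatFunc ℝ)} {s : ℂ} (h : ¬ HasPole G s) :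
    Tendsto (evalM G) (𝓝 s) (𝓝 (evalM G s)) := by
  refine tendsto_matrix fun i j => ?_
  exact (evalC_differentiableAt (fun hp => h ⟨i, j, hp⟩)).continuousAt

lemma evalM_add_cofinite (A B : Matrix (Fin n) (Fin n) (RatFunc ℝ)) :
    ∀ᶠ s : ℂ in cofinite, evalM (A + B) s = evalM A s + evalM B s := by
  filter_upwards [not_hasPole_cofinite A, not_hasPole_cofinite B] with s ha hb
  ext i j
  simp only [evalM, Matrix.of_apply, Matrix.add_apply]
  exact RatFunc.eval_add _ _ (fun h => ha ⟨i, j, h⟩) (fun h => hb ⟨i, j, h⟩)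

lemma evalC_sum_cofinite {ι : Type*} (t : Finset ι) (f : ι → RatFunc ℝ) :
    ∀ᶠ s : ℂ in cofinite, evalC (∑ i ∈ t, f i) s = ∑ i ∈ t, evalC (f i) s := by
  classical
  induction t using Finset.induction_on with
  | empty => simp [evalC]
  | insert a t ha ih =>
    filter_upwards [ih, not_pole_cofinite (f a), not_pole_cofinite (∑ i ∈ t, f i)] with s h1 h2 h3
    rw [Finset.sum_insert ha, Finset.sum_insert ha, ← h1]
    exact RatFunc.eval_add _ _ h2 h3

lemma evalM_mul_cofinite (A B : Matrix (Fin n) (Fin n) (RatFunc ℝ)) :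
    ∀ᶠ s : ℂ in cofinite, evalM (A * B) s = evalM A s * evalM B s := by
  have : ∀ᶠ s : ℂ in cofinite, ∀ i j,
      evalC (∑ k, A i k * B k j) s = ∑ k, evalC (A i k * B k j) s := by
    simp only [Filter.eventually_all]
    exact fun i j => evalC_sum_cofinite _ _
  filter_upwards [not_hasPole_cofinite A, not_hasPole_cofinite B, this] with s ha hb hs
  ext i j
  simp only [evalM, Matrix.of_apply, Matrix.mul_apply]
  rw [hs]
  refine Finset.sum_congr rfl fun k _ => ?_
  exact RatFunc.eval_mul _ _ (fun h => ha ⟨i, k, h⟩) (fun h => hb ⟨k, j, h⟩)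

lemma evalM_one (s : ℂ) : evalM (1 : Matrix (Fin n) (Fin n) (RatFunc ℝ)) s = 1 := by
  ext i j
  by_cases h : i = j <;> simp [evalM, evalC, h, Matrix.one_apply]

lemma aeval_conj (p : ℝ[X]) (s : ℂ) :
    aeval ((starRingEnd ℂ) s) p = (starRingEnd ℂ) (aeval s p) := by
  have := Polynomial.aeval_algHom_apply (Complex.conjAe : ℂ →ₐ[ℝ] ℂ) s p
  simpa using this

lemma evalC_conj (f : RatFunc ℝ) (s : ℂ) :
    evalC f ((starRingEnd ℂ) s) = (starRingEnd ℂ) (evalC f s) := by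
  rw [evalC_eq, evalC_eq, aeval_conj, aeval_conj, map_div₀]

lemma isPoleAt_conj (f : RatFunc ℝ) (s : ℂ) :
    IsPoleAt f ((starRingEnd ℂ) s) ↔ IsPoleAt f s := by
  rw [isPoleAt_iff, isPoleAt_iff, aeval_conj, map_eq_zero]

/-- Bounded near `a` along some filter implies no pole. -/
lemma not_pole_of_bdd (f : RatFunc ℝ) (a : ℂ) (l : Filter ℂ) [l.NeBot] (hl : l ≤ 𝓝[≠] a)
    (B : ℝ) (hB : ∀ᶠ s in l, ‖evalC f s‖ ≤ B) : ¬ IsPoleAt f a := by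
  intro hp
  rw [isPoleAt_iff] at hp
  have hd : Tendsto (fun s : ℂ => aeval s f.denom) l (𝓝 0) := by
    have := (Polynomial.continuous_aeval (A := ℂ) f.denom).tendsto a
    rw [hp] at this
    exact this.mono_left (hl.trans inf_le_left)
  have hn : Tendsto (fun s : ℂ => aeval s f.num) l (𝓝 (aeval a f.num)) :=
    ((Polynomial.continuous_aeval (A := ℂ) f.num).tendsto a).mono_left (hl.trans inf_le_left)
  have hn0 : Tendsto (fun s : ℂ => aeval s f.num) l (𝓝 0) := by
    rw [tendsto_zero_iff_norm_tendsto_zero] at hd ⊢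
    have hd' := hd.const_mul B
    rw [mul_zero] at hd'
    refine squeeze_zero' (Eventually.of_forall fun _ => norm_nonneg _) ?_ hd'
    have h1 := (hl.trans (nhdsNE_le_cofinite a)) (aeval_ne_zero_cofinite _ f.denom_ne_zero)
    filter_upwards [hB, h1] with s h2 h3
    rw [evalC_eq, norm_div, div_le_iff₀ (norm_pos_iff.2 h3)] at h2
    exact h2
  have h0 := tendsto_nhds_unique hn hn0
  obtain ⟨u, v, huv⟩ := f.isCoprime_num_denom
  have := congrArg (aeval a) huv
  simp [h0, hp] at this

/-- leading behaviour of a polynomial at infinity -/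
lemma poly_tendsto_inf (p : ℝ[X]) (d : ℕ) (hd : p.natDegree ≤ d) :
    Tendsto (fun s : ℂ => aeval s p / s ^ d) (Bornology.cobounded ℂ) (𝓝 (p.coeff d : ℂ)) := by
  have h1 : Tendsto (fun s : ℂ => aeval s⁻¹ (p.reflect d)) (Bornology.cobounded ℂ)
      (𝓝 (p.coeff d : ℂ)) := by
    have h2 := ((Polynomial.continuous_aeval (A := ℂ) (p.reflect d)).tendsto 0).comp
      (tendsto_inv₀_cobounded (α := ℂ))
    have h3 : aeval (0 : ℂ) (p.reflect d) = (p.coeff d : ℂ) := by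
      rw [← Polynomial.coeff_zero_eq_aeval_zero', Polynomial.coeff_reflect,
        Polynomial.revAt_le (Nat.zero_le d), Nat.sub_zero]
      rfl
    rw [h3] at h2
    exact h2
  refine h1.congr' ?_
  have : ∀ᶠ s : ℂ in Bornology.cobounded ℂ, s ≠ 0 :=
    Bornology.le_cofinite ℂ (by simp)
  filter_upwards [this] with s hs
  let _ := invertibleOfNonzero hs
  have := Polynomial.eval₂_reflect_mul_pow (algebraMap ℝ ℂ) s d p hd
  rw [eq_div_iff (pow_ne_zero _ hs)]
  simpa [Polynomial.aeval_def] using this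

lemma evalC_tendsto_inf (f : RatFunc ℝ) (hf : f.num.degree ≤ f.denom.degree) :
    Tendsto (evalC f) (Bornology.cobounded ℂ) (𝓝 (atInfinity f : ℂ)) := by
  have hnd := Polynomial.natDegree_le_natDegree hf
  have h1 := poly_tendsto_inf f.num f.denom.natDegree hnd
  have h2 := poly_tendsto_inf f.denom f.denom.natDegree le_rfl
  have hlc : (f.denom.coeff f.denom.natDegree : ℂ) ≠ 0 := by
    simpa using f.denom_ne_zero
  have h3 := h1.div h2 hlc
  have h4 : (f.num.coeff f.denom.natDegree : ℂ) / (f.denom.coeff f.denom.natDegree : ℂ)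
      = (atInfinity f : ℂ) := by
    unfold atInfinity
    split_ifs with h
    · rw [← Polynomial.natDegree_eq_of_degree_eq h, Polynomial.coeff_natDegree,
        Polynomial.natDegree_eq_of_degree_eq h, Polynomial.coeff_natDegree]
      push_cast
      rfl
    · have hlt := lt_of_le_of_ne hf h
      rw [Polynomial.degree_eq_natDegree f.denom_ne_zero] at hlt
      rw [Polynomial.coeff_eq_zero_of_degree_lt hlt]
      simp
  rw [h4] at h3
  refine h3.congr' ?_
  have : ∀ᶠ s : ℂ in Bornology.cobounded ℂ, s ≠ 0 :=
    Bornology.le_cofinite ℂ (by simp)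
  filter_upwards [this] with s hs
  simp only [Pi.div_apply]
  rw [evalC_eq, div_div_div_cancel_right₀ (pow_ne_zero _ hs)]

lemma evalM_tendsto_inf {G : Matrix (Fin n) (Fin n) (RatFunc ℝ)} (hG : Proper G) :
    Tendsto (evalM G) (Bornology.cobounded ℂ) (𝓝 ((evalInf G).map Complex.ofReal)) := by
  refine tendsto_matrix fun i j => ?_
  exact evalC_tendsto_inf _ (hG i j)

lemma proper_of_bdd (f : RatFunc ℝ) (B : ℝ)
    (hB : ∀ᶠ s in Bornology.cobounded ℂ, ‖evalC f s‖ ≤ B) : f.num.degree ≤ f.denom.degree := by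
  by_contra hlt
  rw [not_le] at hlt
  have hf : f.num ≠ 0 := by
    rintro h
    simp [h] at hlt
  have hnd := Polynomial.natDegree_lt_natDegree f.denom_ne_zero hlt
  have h1 := poly_tendsto_inf f.num f.num.natDegree le_rfl
  have h2 := poly_tendsto_inf f.denom f.num.natDegree hnd.le
  rw [Polynomial.coeff_eq_zero_of_natDegree_lt hnd, Complex.ofReal_zero] at h2
  have hn0 : Tendsto (fun s : ℂ => aeval s f.num / s ^ f.num.natDegree)
      (Bornology.cobounded ℂ) (𝓝 0) := by
    rw [tendsto_zero_iff_norm_tendsto_zero] at h2 ⊢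
    have hd' := h2.const_mul B
    rw [mul_zero] at hd'
    refine squeeze_zero' (Eventually.of_forall fun _ => norm_nonneg _) ?_ hd'
    have h1 := Bornology.le_cofinite ℂ (aeval_ne_zero_cofinite _ f.denom_ne_zero)
    filter_upwards [hB, h1] with s h2 h3
    rw [evalC_eq, norm_div, div_le_iff₀ (norm_pos_iff.2 h3)] at h2
    rw [norm_div, norm_div, ← mul_div_assoc]
    gcongr
  have h0 := tendsto_nhds_unique h1 hn0
  simp [hf] at h0

lemma evalM_zero_eq (G : Matrix (Fin n) (Fin n) (RatFunc ℝ)) :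
    evalM G 0 = (evalR G 0).map Complex.ofReal := by
  ext i j
  simp only [evalM, evalR, Matrix.of_apply, Matrix.map_apply, evalC_eq, RatFunc.eval]
  rw [← Polynomial.coeff_zero_eq_aeval_zero', ← Polynomial.coeff_zero_eq_aeval_zero']
  simp [Polynomial.coeff_zero_eq_eval_zero]

/-! ### Vector norms and quadratic forms -/

open scoped Matrix.Norms.L2Operator

/-- Euclidean norm of a plain vector. -/
def nv (x : Fin n → ℂ) : ℝ := ‖(WithLp.toLp 2 x : EuclideanSpace ℂ (Fin n))‖

lemma nv_nonneg (x : Fin n → ℂ) : 0 ≤ nv x := norm_nonneg _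

lemma nv_eq_zero {x : Fin n → ℂ} : nv x = 0 ↔ x = 0 := by
  simp [nv]

lemma nv_zero : nv (0 : Fin n → ℂ) = 0 := nv_eq_zero.2 rfl

lemma nv_add_le (x y : Fin n → ℂ) : nv (x + y) ≤ nv x + nv y := by
  simpa [nv] using norm_add_le (WithLp.toLp 2 x : EuclideanSpace ℂ (Fin n)) (WithLp.toLp 2 y)

lemma nv_apply_le (x : Fin n → ℂ) (i : Fin n) : ‖x i‖ ≤ nv x := by
  simpa [nv] using PiLp.norm_apply_le (WithLp.toLp 2 x : EuclideanSpace ℂ (Fin n)) i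

lemma nv_mulVec_le (A : Matrix (Fin n) (Fin n) ℂ) (x : Fin n → ℂ) :
    nv (A *ᵥ x) ≤ ‖A‖ * nv x :=
  Matrix.l2_opNorm_mulVec A (WithLp.toLp 2 x)

lemma norm_dot_le (x y : Fin n → ℂ) : ‖star x ⬝ᵥ y‖ ≤ nv x * nv y := by
  have := norm_inner_le_norm (𝕜 := ℂ) (WithLp.toLp 2 x : EuclideanSpace ℂ (Fin n)) (WithLp.toLp 2 y)
  rw [EuclideanSpace.inner_toLp_toLp, dotProduct_comm] at this
  exact this

lemma im_dot_comm (x y : Fin n → ℂ) : (star x ⬝ᵥ y).im = - (star y ⬝ᵥ x).im := by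
  have : star x ⬝ᵥ y = star (star y ⬝ᵥ x) := by
    rw [Matrix.star_dotProduct]
  rw [this]
  simp

lemma niKer_dot (M : Matrix (Fin n) (Fin n) ℂ) (z : Fin n → ℂ) :
    (star z ⬝ᵥ (niKer M *ᵥ z)).re = -2 * (star z ⬝ᵥ (M *ᵥ z)).im := by
  have h : star z ⬝ᵥ (Mᴴ *ᵥ z) = star (star z ⬝ᵥ (M *ᵥ z)) := by
    rw [Matrix.star_dotProduct, Matrix.star_mulVec, Matrix.conjTranspose_conjTranspose,
      ← Matrix.dotProduct_mulVec]
  unfold niKer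
  rw [Matrix.smul_mulVec, Matrix.sub_mulVec, dotProduct_smul, dotProduct_sub, h]
  simp
  ring

lemma quad_perturb (A B : Matrix (Fin n) (Fin n) ℂ) (z : Fin n → ℂ) :
    (star z ⬝ᵥ (A *ᵥ z)).im ≤ (star z ⬝ᵥ (B *ᵥ z)).im + ‖A - B‖ * nv z ^ 2 := by
  have h1 : star z ⬝ᵥ (A *ᵥ z) = star z ⬝ᵥ (B *ᵥ z) + star z ⬝ᵥ ((A - B) *ᵥ z) := by
    rw [Matrix.sub_mulVec, dotProduct_sub]
    ring
  rw [h1, Complex.add_im]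
  have h2 := norm_dot_le z ((A - B) *ᵥ z)
  have h3 := nv_mulVec_le (A - B) z
  have h4 := (Complex.abs_im_le_norm (star z ⬝ᵥ ((A - B) *ᵥ z)))
  have h5 := le_abs_self (star z ⬝ᵥ ((A - B) *ᵥ z)).im
  have h6 := mul_le_mul_of_nonneg_left h3 (nv_nonneg z)
  nlinarith

lemma continuous_quad (M : Matrix (Fin n) (Fin n) ℂ) :
    Continuous (fun z : Fin n → ℂ => star z ⬝ᵥ (M *ᵥ z)) := by
  unfold dotProduct Matrix.mulVec dotProduct
  simp only [Pi.star_apply]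
  fun_prop

/-- Positive definiteness is coercive. -/
lemma posDef_coercive (M : Matrix (Fin n) (Fin n) ℂ) (hM : M.PosDef) :
    ∃ δ : ℝ, 0 < δ ∧ ∀ z : Fin n → ℂ, δ * nv z ^ 2 ≤ (star z ⬝ᵥ (M *ᵥ z)).re := by
  let S : Set (EuclideanSpace ℂ (Fin n)) := Metric.sphere 0 1
  have hS : IsCompact S := isCompact_sphere 0 1
  let q : EuclideanSpace ℂ (Fin n) → ℝ := fun x => (star x.ofLp ⬝ᵥ (M *ᵥ x.ofLp)).re
  have hq : Continuous q :=
    Complex.continuous_re.comp ((continuous_quad M).comp (PiLp.continuous_ofLp 2 _))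
  have key : ∃ δ : ℝ, 0 < δ ∧ ∀ x ∈ S, δ ≤ q x := by
    rcases S.eq_empty_or_nonempty with h | h
    · exact ⟨1, one_pos, by simp [h]⟩
    · obtain ⟨x, hx, hmin⟩ := hS.exists_isMinOn h hq.continuousOn
      refine ⟨q x, ?_, fun y hy => hmin hy⟩
      have hx0 : x.ofLp ≠ 0 := by
        intro h0
        have hx' : x = 0 := by
          ext i
          simp [h0]
        simp [S, hx'] at hx
      exact (Complex.pos_iff.1 (hM.dotProduct_mulVec_pos hx0)).1
  obtain ⟨δ, hδ, h⟩ := key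
  refine ⟨δ, hδ, fun z => ?_⟩
  by_cases hz : z = 0
  · subst hz
    simp [nv_zero]
  have hp : 0 < nv z := lt_of_le_of_ne (nv_nonneg z) (fun h => hz (nv_eq_zero.1 h.symm))
  have hmem : (WithLp.toLp 2 (((nv z)⁻¹ : ℂ) • z) : EuclideanSpace ℂ (Fin n)) ∈ S := by
    simp only [S, mem_sphere_zero_iff_norm, WithLp.toLp_smul, norm_smul]
    rw [norm_inv, Complex.norm_real, Real.norm_of_nonneg hp.le]
    exact inv_mul_cancel₀ hp.ne'
  have h1 := h _ hmem
  have h2 : q (WithLp.toLp 2 (((nv z)⁻¹ : ℂ) • z)) =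
      (nv z)⁻¹ ^ 2 * (star z ⬝ᵥ (M *ᵥ z)).re := by
    simp only [q]
    rw [Matrix.mulVec_smul, dotProduct_smul, star_smul, smul_dotProduct, smul_smul]
    have : ((nv z : ℂ)⁻¹ * star ((nv z : ℂ)⁻¹)) = (((nv z)⁻¹ ^ 2 : ℝ) : ℂ) := by
      push_cast
      rw [star_inv₀, Complex.star_def, Complex.conj_ofReal]
      ring
    rw [smul_eq_mul, this, Complex.re_ofReal_mul]
  rw [h2, inv_pow, inv_mul_eq_div, le_div_iff₀ (by positivity)] at h1
  exact h1

/-! ### The loop inequality -/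

lemma loop_bound {δ c η : ℝ} (hδ : 0 < δ) (hc1 : 1 ≤ c) (hη : η * (8 * c ^ 2) = δ)
    {A K : Matrix (Fin n) (Fin n) ℂ}
    (hA : ∀ z : Fin n → ℂ, (star z ⬝ᵥ (A *ᵥ z)).im ≤ η * nv z ^ 2)
    (hK : ∀ z : Fin n → ℂ, (star z ⬝ᵥ (K *ᵥ z)).im ≤ -δ * nv z ^ 2)
    (hc : ∀ z : Fin n → ℂ, nv (K *ᵥ z) ≤ c * nv z)
    {τ : ℝ} (hτ : τ ∈ Set.Icc (0 : ℝ) 1) {y w v : Fin n → ℂ}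
    (hy : y = w + (τ : ℂ) • (A *ᵥ (K *ᵥ y + v))) :
    nv y ≤ (1 + (2 + 4 * c) / δ) * (nv w + nv v) := by
  have hw := nv_nonneg w
  have hv := nv_nonneg v
  have hY := nv_nonneg y
  set z := K *ᵥ y + v with hz
  have hη0 : 0 < η := by
    by_contra hcon
    have : η * (8 * c ^ 2) ≤ 0 := mul_nonpos_of_nonpos_of_nonneg (not_lt.1 hcon) (by positivity)
    linarith
  have hzn : nv z ≤ c * nv y + nv v := (nv_add_le _ _).trans (by linarith [hc y])
  have e1 : (star z ⬝ᵥ y).im = (star z ⬝ᵥ w).im + τ * (star z ⬝ᵥ (A *ᵥ z)).im := by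
    conv_lhs => rw [hy]
    rw [dotProduct_add, dotProduct_smul, Complex.add_im, smul_eq_mul, Complex.im_ofReal_mul]
  have e2 : (star y ⬝ᵥ z).im = (star y ⬝ᵥ (K *ᵥ y)).im + (star y ⬝ᵥ v).im := by
    rw [hz, dotProduct_add, Complex.add_im]
  have e3 := im_dot_comm z y
  have b1 : (star z ⬝ᵥ w).im ≤ nv z * nv w :=
    ((le_abs_self _).trans (Complex.abs_im_le_norm _)).trans (norm_dot_le _ _)
  have b2 : (star y ⬝ᵥ v).im ≤ nv y * nv v :=
    ((le_abs_self _).trans (Complex.abs_im_le_norm _)).trans (norm_dot_le _ _)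
  have b3 : τ * (star z ⬝ᵥ (A *ᵥ z)).im ≤ η * nv z ^ 2 := by
    have h1 := mul_le_mul_of_nonneg_left (hA z) hτ.1
    have h2 : 0 ≤ η * nv z ^ 2 := by positivity
    nlinarith [hτ.2]
  have b4 := hK y
  have main : δ * nv y ^ 2 ≤ nv y * nv v + nv z * nv w + η * nv z ^ 2 := by linarith
  set N := nv w + nv v with hN
  have hN0 : 0 ≤ N := by positivity
  have hB : 0 ≤ (2 + 4 * c) / δ := by positivity
  rcases le_or_gt (nv y) N with h | h
  · nlinarith
  · have hpos : 0 < nv y := lt_of_le_of_lt hN0 h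
    have hz2 : nv z ≤ 2 * c * nv y := by nlinarith
    have hz3 : nv z ^ 2 ≤ (2 * c * nv y) ^ 2 := pow_le_pow_left₀ (nv_nonneg z) hz2 2
    have hz4 : η * nv z ^ 2 ≤ δ / 2 * nv y ^ 2 := by
      calc η * nv z ^ 2 ≤ η * (2 * c * nv y) ^ 2 := by gcongr
        _ = (η * (8 * c ^ 2)) / 2 * nv y ^ 2 := by ring
        _ = _ := by rw [hη]
    have h5 : nv z * nv w ≤ 2 * c * nv y * N := by
      apply mul_le_mul hz2 (by linarith) hw (by positivity)
    have h6 : nv y * nv v ≤ nv y * N := by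
      apply mul_le_mul_of_nonneg_left _ hY
      linarith
    have h7 : nv y * (δ / 2 * nv y) ≤ nv y * ((1 + 2 * c) * N) := by nlinarith
    have h8 := le_of_mul_le_mul_left h7 hpos
    have h9 : nv y ≤ (2 + 4 * c) / δ * N := by
      rw [div_mul_eq_mul_div, le_div_iff₀ hδ]
      nlinarith
    nlinarith

lemma exists_norm_bound {α : Type*} {l : Filter α} {F : α → Matrix (Fin n) (Fin n) ℂ}
    {A : Matrix (Fin n) (Fin n) ℂ} (h : Tendsto F l (𝓝 A)) :
    ∃ c : ℝ, 1 ≤ c ∧ ∀ᶠ s in l, ‖F s‖ ≤ c := by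
  refine ⟨max 1 (‖A‖ + 1), le_max_left _ _, ?_⟩
  have h1 : Tendsto (fun s => ‖F s‖) l (𝓝 ‖A‖) := h.norm
  filter_upwards [h1.eventually_lt_const (lt_add_one ‖A‖)] with s hs
  exact hs.le.trans (le_max_right _ _)

lemma quad_eventually {α : Type*} {l : Filter α} {F : α → Matrix (Fin n) (Fin n) ℂ}
    {A : Matrix (Fin n) (Fin n) ℂ} (h : Tendsto F l (𝓝 A)) {η : ℝ} (hη : 0 < η) :
    ∀ᶠ s in l, ∀ z : Fin n → ℂ,
      (star z ⬝ᵥ (F s *ᵥ z)).im ≤ (star z ⬝ᵥ (A *ᵥ z)).im + η * nv z ^ 2 := by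
  have h1 : Tendsto (fun s => ‖F s - A‖) l (𝓝 0) := tendsto_iff_norm_sub_tendsto_zero.1 h
  filter_upwards [h1.eventually_lt_const hη] with s hs z
  refine (quad_perturb (F s) A z).trans ?_
  gcongr

lemma sni_near {C : Matrix (Fin n) (Fin n) (RatFunc ℝ)} (hC : IsSNI C) {ω : ℝ} (hω : 0 < ω) :
    ∃ δ : ℝ, 0 < δ ∧ ∀ᶠ s in 𝓝 (jw ω), ∀ z : Fin n → ℂ,
      (star z ⬝ᵥ (evalM C s *ᵥ z)).im ≤ -δ * nv z ^ 2 := by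
  obtain ⟨δ, hδ, h⟩ := posDef_coercive _ (hC.2 ω hω)
  have hnp : ¬ HasPole C (jw ω) := by
    rintro ⟨i, j, hp⟩
    exact hC.1.2 _ (by simp [jw]) i j hp
  refine ⟨δ / 4, by positivity, ?_⟩
  filter_upwards [quad_eventually (evalM_tendsto hnp) (show 0 < δ / 4 by positivity)] with s hs z
  have h1 := hs z
  have h2 := h z
  rw [niKer_dot] at h2
  nlinarith [sq_nonneg (nv z)]

/-- residue form of a rational function with at most a simple pole -/
lemma exists_regular_part (f : RatFunc ℝ) (a r : ℂ)
    (h : Tendsto (fun s : ℂ => (s - a) * (Complex.I * evalC f s)) (𝓝[≠] a) (𝓝 r)) :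
    ∃ b : ℂ, Tendsto (fun s : ℂ => evalC f s + Complex.I * r * (s - a)⁻¹) (𝓝[≠] a) (𝓝 b) := by
  classical
  let g : ℂ → ℂ := Function.update (fun s : ℂ => (s - a) * (Complex.I * evalC f s)) a r
  have hg : ContinuousAt g a := continuousAt_update_same.2 h
  have hgd : ∀ᶠ z in 𝓝[≠] a, DifferentiableAt ℂ g z := by
    have h1 := nhdsNE_le_cofinite a (not_pole_cofinite f)
    filter_upwards [h1, self_mem_nhdsWithin] with z hz hza
    have h2 : DifferentiableAt ℂ (fun s : ℂ => (s - a) * (Complex.I * evalC f s)) z :=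
      (differentiableAt_id.sub_const a).mul ((evalC_differentiableAt hz).const_mul _)
    refine h2.congr_of_eventuallyEq ?_
    filter_upwards [isOpen_ne.mem_nhds hza] with w hw
    simp [g, Function.update_of_ne hw]
  have han := Complex.analyticAt_of_differentiable_on_punctured_nhds_of_continuousAt hgd hg
  have hd := han.differentiableAt.hasDerivAt
  rw [hasDerivAt_iff_tendsto_slope] at hd
  refine ⟨-Complex.I * deriv g a, ?_⟩
  refine (hd.const_mul (-Complex.I)).congr' ?_
  filter_upwards [self_mem_nhdsWithin] with s hs
  have hs' : s ≠ a := hs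
  have hsa : s - a ≠ 0 := sub_ne_zero.2 hs'
  simp only [g, slope_def_field, Function.update_self, Function.update_of_ne hs']
  field_simp
  ring_nf
  simp only [Complex.I_sq]
  ring

lemma ni_near {P : Matrix (Fin n) (Fin n) (RatFunc ℝ)} (hP : IsNI P) {ω : ℝ} (hω : 0 < ω)
    {η : ℝ} (hη : 0 < η) :
    ∀ᶠ s in 𝓝[≠] (jw ω), 0 ≤ s.re → ∀ z : Fin n → ℂ,
      (star z ⬝ᵥ (evalM P s *ᵥ z)).im ≤ η * nv z ^ 2 := by
  have hR : ∃ R : Matrix (Fin n) (Fin n) ℂ, R.PosSemidef ∧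
      Tendsto (fun s : ℂ => (s - jw ω) • Complex.I • evalM P s) (𝓝[≠] jw ω) (𝓝 R) := by
    by_cases hp : HasPole P (jw ω)
    · exact hP.2.2.2.1 ω hω hp
    · refine ⟨0, Matrix.PosSemidef.zero, ?_⟩
      have h1 := (evalM_tendsto hp).mono_left (nhdsWithin_le_nhds (s := {jw ω}ᶜ))
      have h2 : Tendsto (fun s : ℂ => s - jw ω) (𝓝[≠] jw ω) (𝓝 0) := by
        have : Tendsto (fun s : ℂ => s - jw ω) (𝓝 (jw ω)) (𝓝 (jw ω - jw ω)) :=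
          (continuous_id.sub continuous_const).tendsto _
        rw [sub_self] at this
        exact this.mono_left nhdsWithin_le_nhds
      have := h2.smul (h1.const_smul Complex.I)
      rwa [zero_smul] at this
  obtain ⟨R, hRp, hR⟩ := hR
  have hentry : ∀ i j, ∃ b : ℂ, Tendsto (fun s : ℂ => evalC (P i j) s +
      Complex.I * R i j * (s - jw ω)⁻¹) (𝓝[≠] jw ω) (𝓝 b) := by
    intro i j
    apply exists_regular_part
    have := (tendsto_pi_nhds.1 ((tendsto_pi_nhds.1 hR) i)) j
    exact this
  choose b hb using hentry
  let F : ℂ → Matrix (Fin n) (Fin n) ℂ := fun s =>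
    evalM P s + (Complex.I * (s - jw ω)⁻¹) • R
  have hF : Tendsto F (𝓝[≠] jw ω) (𝓝 (Matrix.of b)) := by
    refine tendsto_matrix fun i j => ?_
    refine (hb i j).congr fun s => ?_
    simp only [F, Matrix.add_apply, Matrix.smul_apply, evalM, Matrix.of_apply, smul_eq_mul]
    ring
  have hquad : ∀ (s : ℂ) (z : Fin n → ℂ), (star z ⬝ᵥ (F s *ᵥ z)).im =
      (star z ⬝ᵥ (evalM P s *ᵥ z)).im + (s - jw ω)⁻¹.re * (star z ⬝ᵥ (R *ᵥ z)).re := by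
    intro s z
    have h0 := (Complex.nonneg_iff.1 (hRp.dotProduct_mulVec_nonneg z)).2
    simp only [F]
    rw [Matrix.add_mulVec, Matrix.smul_mulVec, dotProduct_add, dotProduct_smul, Complex.add_im,
      smul_eq_mul, mul_assoc, Complex.I_mul_im, Complex.mul_re, ← h0]
    ring
  have hA : ∀ z : Fin n → ℂ, (star z ⬝ᵥ (Matrix.of b *ᵥ z)).im ≤ 0 := by
    intro z
    have hax : Tendsto jw (𝓝[≠] ω) (𝓝[≠] (jw ω)) := by
      apply tendsto_nhdsWithin_of_tendsto_nhds_of_eventually_within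
      · have : Continuous jw := by
          unfold jw
          fun_prop
        exact (this.tendsto ω).mono_left nhdsWithin_le_nhds
      · filter_upwards [self_mem_nhdsWithin] with t ht h
        apply ht
        simpa [jw] using h
    have h1 := hF.comp hax
    have h2 : Continuous (fun M : Matrix (Fin n) (Fin n) ℂ => (star z ⬝ᵥ (M *ᵥ z)).im) := by
      unfold dotProduct Matrix.mulVec dotProduct
      fun_prop
    have h3 := (h2.tendsto (Matrix.of b)).comp h1
    refine le_of_tendsto h3 ?_
    have h4 : ∀ᶠ t in 𝓝[≠] ω, 0 < t :=
      nhdsWithin_le_nhds (lt_mem_nhds hω)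
    have h5 := hax.eventually (nhdsNE_le_cofinite _ (not_hasPole_cofinite P))
    filter_upwards [h4, h5] with t ht hnp
    simp only [Function.comp]
    rw [hquad]
    have h6 := hP.2.2.1 t ht hnp
    have h7 := (Complex.nonneg_iff.1 (h6.dotProduct_mulVec_nonneg z)).1
    rw [niKer_dot] at h7
    have h8 : (jw t - jw ω)⁻¹.re = 0 := by
      simp [jw, Complex.inv_re]
    rw [h8]
    linarith
  filter_upwards [quad_eventually hF hη] with s hs hre z
  have h1 := hs z
  rw [hquad] at h1
  have h2 := hA z
  have h3 := (Complex.nonneg_iff.1 (hRp.dotProduct_mulVec_nonneg z)).1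
  have h4 : 0 ≤ (s - jw ω)⁻¹.re := by
    rw [Complex.inv_re]
    have : (s - jw ω).re = s.re := by simp [jw]
    rw [this]
    exact div_nonneg hre (Complex.normSq_nonneg _)
  have h5 := mul_nonneg h4 h3
  linarith

/-- Uniform boundedness of the (homotoped) loop along a filter. -/
def LoopBdd (P C : Matrix (Fin n) (Fin n) (RatFunc ℝ)) (T : Set ℝ) (l : Filter ℂ) : Prop :=
  ∃ B : ℝ, ∀ᶠ s in l, ∀ τ ∈ T, ∀ y w v : Fin n → ℂ,
    y = w + (τ : ℂ) • (evalM P s *ᵥ (evalM C s *ᵥ y + v)) → nv y ≤ B * (nv w + nv v)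

lemma loopBdd_axis {P C : Matrix (Fin n) (Fin n) (RatFunc ℝ)} (hP : IsNI P) (hC : IsSNI C)
    {ω : ℝ} (hω : 0 < ω) :
    LoopBdd P C (Set.Icc 0 1) (𝓝[≠] (jw ω) ⊓ 𝓟 {s | 0 ≤ s.re}) := by
  obtain ⟨δ, hδ, hK⟩ := sni_near hC hω
  have hnp : ¬ HasPole C (jw ω) := by
    rintro ⟨i, j, hp⟩
    exact hC.1.2 _ (by simp [jw]) i j hp
  obtain ⟨c, hc1, hc⟩ := exists_norm_bound (evalM_tendsto hnp)
  have hcp : (0 : ℝ) < 8 * c ^ 2 := by positivity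
  have hA := ni_near hP hω (div_pos hδ hcp)
  refine ⟨1 + (2 + 4 * c) / δ, ?_⟩
  rw [Filter.eventually_inf_principal]
  filter_upwards [hA, nhdsWithin_le_nhds hK, nhdsWithin_le_nhds hc] with s h1 h2 h3 hre τ hτ y w v hy
  refine loop_bound hδ hc1 (div_mul_cancel₀ _ hcp.ne') (h1 hre) h2 (fun z => ?_) hτ hy
  exact (nv_mulVec_le _ _).trans (mul_le_mul_of_nonneg_right h3 (nv_nonneg z))

/-! ### Homotopy -/

lemma loopBdd_regular {P C : Matrix (Fin n) (Fin n) (RatFunc ℝ)} {l : Filter ℂ}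
    {P0 C0 : Matrix (Fin n) (Fin n) ℂ} (hP : Tendsto (evalM P) l (𝓝 P0))
    (hC : Tendsto (evalM C) l (𝓝 C0)) (hdet : (1 - P0 * C0).det ≠ 0) :
    LoopBdd P C {1} l := by
  obtain ⟨p, hp1, hp⟩ := exists_norm_bound hP
  set X0 := 1 - P0 * C0 with hX0
  have hX : Tendsto (fun s => 1 - evalM P s * evalM C s) l (𝓝 X0) :=
    tendsto_const_nhds.sub (hP.mul hC)
  set k := ‖X0⁻¹‖ + 1 with hk
  have hk0 : 0 < k := by positivity
  have hX1 : Tendsto (fun s => ‖(1 - evalM P s * evalM C s) - X0‖) l (𝓝 0) :=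
    tendsto_iff_norm_sub_tendsto_zero.1 hX
  refine ⟨2 * k * p, ?_⟩
  filter_upwards [hp, hX1.eventually_lt_const (show 0 < 1 / (2 * k) by positivity)]
    with s h1 h2 τ hτ y w v hy
  rw [Set.mem_singleton_iff] at hτ
  subst hτ
  rw [Complex.ofReal_one, one_smul, Matrix.mulVec_add, ← add_assoc, Matrix.mulVec_mulVec] at hy
  have e1 : (1 - evalM P s * evalM C s) *ᵥ y = w + evalM P s *ᵥ v := by
    rw [Matrix.sub_mulVec, Matrix.one_mulVec, sub_eq_iff_eq_add]
    conv_lhs => rw [hy]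
    abel
  set X := 1 - evalM P s * evalM C s
  have e2 : y = X0⁻¹ *ᵥ (X *ᵥ y + (-(X - X0)) *ᵥ y) := by
    rw [← Matrix.add_mulVec, Matrix.mulVec_mulVec]
    have : X + -(X - X0) = X0 := by abel
    rw [this, Matrix.nonsing_inv_mul _ (isUnit_iff_ne_zero.2 hdet), Matrix.one_mulVec]
  have hY := nv_nonneg y
  have hw := nv_nonneg w
  have hv := nv_nonneg v
  have b1 : nv y ≤ k * (nv (X *ᵥ y) + nv ((-(X - X0)) *ᵥ y)) := by
    conv_lhs => rw [e2]
    refine (nv_mulVec_le _ _).trans ?_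
    refine mul_le_mul (by linarith) (nv_add_le _ _) (nv_nonneg _) hk0.le
  have b2 : nv ((-(X - X0)) *ᵥ y) ≤ 1 / (2 * k) * nv y := by
    refine (nv_mulVec_le _ _).trans ?_
    rw [norm_neg]
    exact mul_le_mul_of_nonneg_right h2.le hY
  have b3 : nv (X *ᵥ y) ≤ p * (nv w + nv v) := by
    rw [e1]
    refine (nv_add_le _ _).trans ?_
    have := (nv_mulVec_le (evalM P s) v).trans (mul_le_mul_of_nonneg_right h1 hv)
    nlinarith
  have b4 : k * (1 / (2 * k) * nv y) = nv y / 2 := by field_simp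
  have b5 := mul_le_mul_of_nonneg_left b2 hk0.le
  have b6 := mul_le_mul_of_nonneg_left b3 hk0.le
  nlinarith

/-- The homotopy determinant. -/
def hdet (P C : Matrix (Fin n) (Fin n) (RatFunc ℝ)) (τ : ℝ) (s : ℂ) : ℂ :=
  (1 - (τ : ℂ) • (evalM P s * evalM C s)).det

/-- No closed-loop singularity at `s` for all homotopy parameters. -/
def Good (P C : Matrix (Fin n) (Fin n) (RatFunc ℝ)) (s : ℂ) : Prop :=
  ∀ τ ∈ Set.Icc (0 : ℝ) 1, hdet P C τ s ≠ 0

lemma good_of_tendsto {P C : Matrix (Fin n) (Fin n) (RatFunc ℝ)} {l : Filter ℂ}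
    {X0 : Matrix (Fin n) (Fin n) ℂ} (hX : Tendsto (fun s => evalM P s * evalM C s) l (𝓝 X0))
    (hdet : ∀ τ ∈ Set.Icc (0 : ℝ) 1, (1 - (τ : ℂ) • X0).det ≠ 0) :
    ∀ᶠ s in l, Good P C s := by
  have hcont : Continuous (fun q : Matrix (Fin n) (Fin n) ℂ × ℝ =>
      (1 - (q.2 : ℂ) • q.1).det) := by
    apply Continuous.matrix_det
    fun_prop
  have h1 : ∀ᶠ X in 𝓝 X0, ∀ τ ∈ Set.Icc (0 : ℝ) 1, (1 - (τ : ℂ) • X).det ≠ 0 := by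
    apply isCompact_Icc.eventually_forall_of_forall_eventually
    intro τ hτ
    exact hcont.continuousAt.eventually_ne (hdet τ hτ)
  exact hX.eventually h1

lemma det_ne_zero_of_eigs {M : Matrix (Fin n) (Fin n) ℂ} (h : eigsRealAndLT M 1) :
    ∀ τ ∈ Set.Icc (0 : ℝ) 1, (1 - (τ : ℂ) • M).det ≠ 0 := by
  intro τ hτ h0
  have hτ0 : (τ : ℂ) ≠ 0 := by
    intro h1
    rw [h1] at h0
    simp at h0
  have hτp : 0 < τ := lt_of_le_of_ne hτ.1 (fun h => hτ0 (by simp [← h]))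
  have hmem : ((τ⁻¹ : ℝ) : ℂ) ∈ spectrum ℂ M := by
    rw [spectrum.mem_iff, Matrix.isUnit_iff_isUnit_det, isUnit_iff_ne_zero, not_not]
    have : (algebraMap ℂ (Matrix (Fin n) (Fin n) ℂ)) ((τ⁻¹ : ℝ) : ℂ) - M =
        ((τ : ℂ)⁻¹) • (1 - (τ : ℂ) • M) := by
      rw [Algebra.algebraMap_eq_smul_one, smul_sub, smul_smul, inv_mul_cancel₀ hτ0, one_smul]
      push_cast
      rfl
    rw [this, Matrix.det_smul, h0, mul_zero]
  have h2 := (h _ hmem).2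
  rw [Complex.ofReal_re] at h2
  have := (one_le_inv₀ hτp).2 hτ.2
  linarith

lemma good_of_loop {P C : Matrix (Fin n) (Fin n) (RatFunc ℝ)} {s : ℂ} {B : ℝ}
    (h : ∀ τ ∈ Set.Icc (0 : ℝ) 1, ∀ y w v : Fin n → ℂ,
    y = w + (τ : ℂ) • (evalM P s *ᵥ (evalM C s *ᵥ y + v)) → nv y ≤ B * (nv w + nv v)) :
    Good P C s := by
  intro τ hτ h0
  obtain ⟨y, hy0, hy⟩ := Matrix.exists_mulVec_eq_zero_iff.2 h0
  have := h τ hτ y 0 0 (by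
    rw [Matrix.sub_mulVec, Matrix.one_mulVec, Matrix.smul_mulVec, sub_eq_zero,
      ← Matrix.mulVec_mulVec] at hy
    rw [zero_add, add_zero]
    exact hy)
  rw [nv_zero, add_zero, mul_zero] at this
  exact hy0 (nv_eq_zero.1 (le_antisymm this (nv_nonneg _)))

lemma good_conj {P C : Matrix (Fin n) (Fin n) (RatFunc ℝ)} {s : ℂ}
    (h : Good P C s) : Good P C ((starRingEnd ℂ) s) := by
  intro τ hτ h0
  apply h τ hτ
  have hm : ∀ G : Matrix (Fin n) (Fin n) (RatFunc ℝ),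
      evalM G ((starRingEnd ℂ) s) = (starRingEnd ℂ).mapMatrix (evalM G s) := by
    intro G
    ext i j
    simp [evalM, evalC_conj]
  have : hdet P C τ ((starRingEnd ℂ) s) = (starRingEnd ℂ) (hdet P C τ s) := by
    unfold hdet
    rw [RingHom.map_det, map_sub, map_one, hm, hm]
    congr 2
    ext i j
    simp [Matrix.mul_apply]
  rw [this, map_eq_zero] at h0
  exact h0

/-- no zeros in the open right-half plane -/
lemma good_rhp {P C : Matrix (Fin n) (Fin n) (RatFunc ℝ)}
    (hPp : ∀ s : ℂ, 0 < s.re → ¬ HasPole P s) (hCp : ∀ s : ℂ, 0 < s.re → ¬ HasPole C s)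
    (hinf : ∀ᶠ s in Bornology.cobounded ℂ, Good P C s)
    (hax : ∀ ω : ℝ, ∀ᶠ s in 𝓝 (jw ω), 0 < s.re → Good P C s)
    (s0 : ℂ) (hs0 : 0 < s0.re) : Good P C s0 := by
  obtain ⟨M, -, hM⟩ : ∃ M : ℝ, True ∧ ∀ s : ℂ, M < ‖s‖ → Good P C s := by
    rw [← comap_norm_atTop, Filter.eventually_comap] at hinf
    obtain ⟨M, hM⟩ := Filter.eventually_atTop.1 hinf
    exact ⟨M, trivial, fun s hs => hM _ hs.le s rfl⟩
  set R := max M ‖s0‖ + 1 with hR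
  have hRM : M < R := lt_of_le_of_lt (le_max_left _ _) (lt_add_one _)
  have hRs : ‖s0‖ < R := lt_of_le_of_lt (le_max_right _ _) (lt_add_one _)
  have hK : IsCompact (jw '' Set.Icc (-R) R) := by
    refine isCompact_Icc.image ?_
    unfold jw
    fun_prop
  have hev : ∀ᶠ s in 𝓝ˢ (jw '' Set.Icc (-R) R), 0 < s.re → Good P C s := by
    rw [eventually_nhdsSet_iff_forall]
    rintro _ ⟨ω, -, rfl⟩
    exact hax ω
  obtain ⟨U, hU, hKU, hUg⟩ := eventually_nhdsSet_iff_exists.1 hev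
  obtain ⟨ε, hε, hεU⟩ := hK.exists_thickening_subset_open hU hKU
  set e := min (ε / 2) (s0.re / 2) with he
  have he0 : 0 < e := lt_min (by positivity) (by positivity)
  have heε : e < ε := (min_le_left _ _).trans_lt (by linarith)
  have hes : e < s0.re := (min_le_right _ _).trans_lt (by linarith)
  set D : Set ℂ := {s | e < s.re} ∩ Metric.ball 0 R with hD
  have hDo : IsOpen D := (isOpen_lt continuous_const Complex.continuous_re).inter Metric.isOpen_ball
  have hDb : Bornology.IsBounded D := Metric.isBounded_ball.subset Set.inter_subset_right
  have hDc : closure D ⊆ {s | e ≤ s.re} ∩ Metric.closedBall 0 R := by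
    refine closure_minimal ?_ ?_
    · exact Set.inter_subset_inter (fun s (hs : e < s.re) => hs.le) Metric.ball_subset_closedBall
    · exact (isClosed_le continuous_const Complex.continuous_re).inter Metric.isClosed_closedBall
  have hfr : ∀ s ∈ frontier D, Good P C s := by
    intro s hs
    rw [hDo.frontier_eq] at hs
    obtain ⟨hsc, hsn⟩ := hs
    obtain ⟨h1, h2⟩ := hDc hsc
    have h1' : e ≤ s.re := h1
    have h2' : ‖s‖ ≤ R := by simpa using h2
    by_cases h3 : ‖s‖ < R
    · have h4 : s.re = e := by
        refine le_antisymm (not_lt.1 fun h5 => hsn ⟨h5, by simpa using h3⟩) h1'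
      refine hUg s (hεU ?_) (by linarith)
      rw [Metric.mem_thickening_iff]
      refine ⟨jw s.im, ⟨s.im, ?_, rfl⟩, ?_⟩
      · have := (Complex.abs_im_le_norm s).trans h2'
        exact ⟨by linarith [neg_abs_le s.im], (le_abs_self _).trans this⟩
      · have : s - jw s.im = (e : ℂ) := by
          apply Complex.ext <;> simp [jw, h4]
        rw [dist_eq_norm, this, Complex.norm_real, Real.norm_of_nonneg he0.le]
        exact heε
    · exact hM s (by linarith [not_lt.1 h3])
  have hclre : ∀ s ∈ closure D, 0 < s.re := fun s hs => lt_of_lt_of_le he0 (hDc hs).1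
  have hcM : ∀ {G : Matrix (Fin n) (Fin n) (RatFunc ℝ)}, (∀ s : ℂ, 0 < s.re → ¬ HasPole G s) →
      ContinuousOn (evalM G) (closure D) := fun hG s hs =>
    (evalM_tendsto (hG s (hclre s hs))).mono_left nhdsWithin_le_nhds
  have hjc : ContinuousOn (fun q : ℝ × ℂ => hdet P C q.1 q.2) (Set.univ ×ˢ closure D) := by
    have h1 : ContinuousOn (fun q : ℝ × ℂ => evalM P q.2 * evalM C q.2)
        (Set.univ ×ˢ closure D) :=
      ((hcM hPp).comp continuousOn_snd (fun q hq => hq.2)).mul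
        ((hcM hCp).comp continuousOn_snd (fun q hq => hq.2))
    have h2 : ContinuousOn (fun q : ℝ × ℂ =>
        (1 : Matrix (Fin n) (Fin n) ℂ) - (q.1 : ℂ) • (evalM P q.2 * evalM C q.2))
        (Set.univ ×ˢ closure D) := by
      refine continuousOn_const.sub (ContinuousOn.fun_smul ?_ h1)
      fun_prop
    have h3 : Continuous (fun M : Matrix (Fin n) (Fin n) ℂ => M.det) :=
      continuous_id.matrix_det
    exact h3.comp_continuousOn h2
  have hclD : IsCompact (closure D) := hDb.isCompact_closure
  -- lower bound on the frontier
  obtain ⟨m, hm, hmb⟩ : ∃ m : ℝ, 0 < m ∧ ∀ τ ∈ Set.Icc (0 : ℝ) 1, ∀ s ∈ frontier D,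
      m ≤ ‖hdet P C τ s‖ := by
    have hc : IsCompact (Set.Icc (0 : ℝ) 1 ×ˢ frontier D) :=
      isCompact_Icc.prod (hclD.of_isClosed_subset isClosed_frontier frontier_subset_closure)
    have hcont : ContinuousOn (fun q : ℝ × ℂ => ‖hdet P C q.1 q.2‖)
        (Set.Icc (0 : ℝ) 1 ×ˢ frontier D) :=
      (hjc.mono (Set.prod_mono (Set.subset_univ _) frontier_subset_closure)).norm
    rcases (Set.Icc (0 : ℝ) 1 ×ˢ frontier D).eq_empty_or_nonempty with hemp | hne
    · refine ⟨1, one_pos, fun τ hτ s hs => ?_⟩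
      have : (τ, s) ∈ Set.Icc (0 : ℝ) 1 ×ˢ frontier D := ⟨hτ, hs⟩
      rw [hemp] at this
      exact this.elim
    · obtain ⟨q, hq, hmin⟩ := hc.exists_isMinOn hne hcont
      exact ⟨_, norm_pos_iff.2 (hfr q.2 hq.2 q.1 hq.1), fun τ hτ s hs => hmin (a := (τ, s)) ⟨hτ, hs⟩⟩
  -- differentiability in s
  have hdiff : ∀ τ : ℝ, ∀ s ∈ closure D, DifferentiableAt ℂ (hdet P C τ) s := by
    intro τ s hs
    have hent : ∀ i j, DifferentiableAt ℂ
        (fun s => (1 - (τ : ℂ) • (evalM P s * evalM C s) : Matrix (Fin n) (Fin n) ℂ) i j) s := by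
      intro i j
      simp only [Matrix.sub_apply, Matrix.smul_apply, Matrix.mul_apply, smul_eq_mul]
      refine (differentiableAt_const _).sub (DifferentiableAt.const_mul ?_ _)
      refine DifferentiableAt.fun_sum fun k _ => ?_
      refine DifferentiableAt.mul ?_ ?_
      · exact evalC_differentiableAt fun h => hPp s (hclre s hs) ⟨_, _, h⟩
      · exact evalC_differentiableAt fun h => hCp s (hclre s hs) ⟨_, _, h⟩
    have : hdet P C τ = fun s => ∑ σ : Equiv.Perm (Fin n), ((Equiv.Perm.sign σ : ℤ) : ℂ) *
        ∏ i, (1 - (τ : ℂ) • (evalM P s * evalM C s) : Matrix (Fin n) (Fin n) ℂ) (σ i) i := by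
      funext s
      rw [hdet, Matrix.det_apply']
    rw [this]
    refine DifferentiableAt.fun_sum fun σ _ => DifferentiableAt.const_mul ?_ _
    exact DifferentiableAt.fun_finsetProd fun i _ => hent _ _
  -- key : zero free implies uniform lower bound
  have hlow : ∀ τ ∈ Set.Icc (0 : ℝ) 1, (∀ s ∈ closure D, hdet P C τ s ≠ 0) →
      ∀ s ∈ closure D, m ≤ ‖hdet P C τ s‖ := by
    intro τ hτ hnz s hs
    have hd : DiffContOnCl ℂ (fun s => (hdet P C τ s)⁻¹) D := by
      refine DifferentiableOn.diffContOnCl fun s hs => ?_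
      exact ((hdiff τ s hs).inv (hnz s hs)).differentiableWithinAt
    have h1 := Complex.norm_le_of_forall_mem_frontier_norm_le hDb hd (C := m⁻¹) (fun z hz => by
      rw [norm_inv]
      exact inv_anti₀ hm (hmb τ hτ z hz)) hs
    rw [norm_inv] at h1
    exact (inv_le_inv₀ (norm_pos_iff.2 (hnz s hs)) hm).1 h1
  have hconn : ∀ τ ∈ Set.Icc (0 : ℝ) 1, ∀ s ∈ closure D, hdet P C τ s ≠ 0 := by
    by_contra hcon
    push Not at hcon
    obtain ⟨τ1, hτ1, s1, hs1, hz1⟩ := hcon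
    let A : Set ℝ := {τ | ∀ s ∈ closure D, m ≤ ‖hdet P C τ s‖}
    let Q : Set (ℝ × ℂ) := (Set.Icc (0 : ℝ) 1 ×ˢ closure D) ∩
      (fun q : ℝ × ℂ => hdet P C q.1 q.2) ⁻¹' {0}
    have hA : IsClosed A := by
      have : A = ⋂ s ∈ closure D, {τ | m ≤ ‖hdet P C τ s‖} := by
        ext τ
        simp [A]
      rw [this]
      refine isClosed_biInter fun s _ => isClosed_le continuous_const ?_
      refine Continuous.norm ?_
      unfold hdet
      apply Continuous.matrix_det
      fun_prop
    have hQ : IsCompact Q := by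
      have hc : IsCompact (Set.Icc (0 : ℝ) 1 ×ˢ closure D) := isCompact_Icc.prod hclD
      refine hc.of_isClosed_subset ?_ Set.inter_subset_left
      exact (hjc.mono (Set.prod_mono (Set.subset_univ _) subset_rfl)).preimage_isClosed_of_isClosed
        hc.isClosed isClosed_singleton
    have hB : IsClosed (Prod.fst '' Q) := (hQ.image continuous_fst).isClosed
    have hpre := isPreconnected_closed_iff.1 (isPreconnected_Icc (a := (0 : ℝ)) (b := 1)) A
      (Prod.fst '' Q) hA hB
      (by
        intro τ hτ
        by_cases h : ∀ s ∈ closure D, hdet P C τ s ≠ 0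
        · exact Or.inl (hlow τ hτ h)
        · push Not at h
          obtain ⟨s, hs, hz⟩ := h
          exact Or.inr ⟨(τ, s), ⟨⟨hτ, hs⟩, hz⟩, rfl⟩)
      ⟨0, ⟨le_rfl, zero_le_one⟩, hlow 0 ⟨le_rfl, zero_le_one⟩ (fun s _ => by simp [hdet])⟩
      ⟨τ1, hτ1, (τ1, s1), ⟨⟨hτ1, hs1⟩, hz1⟩, rfl⟩
    obtain ⟨τ, -, hτA, ⟨q, hq, rfl⟩⟩ := hpre
    have h1 := hτA q.2 hq.1.2
    have h2 : hdet P C q.1 q.2 = 0 := hq.2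
    rw [h2, norm_zero] at h1
    linarith
  intro τ hτ
  exact hconn τ hτ s0 (subset_closure ⟨hes, by simpa using hRs⟩)

/-! ### Conclusion -/

/-- Matrix version: bounded solutions of the loop equation. -/
lemma entry_bdd_of_loop {P C Y W V : Matrix (Fin n) (Fin n) (RatFunc ℝ)} {l : Filter ℂ}
    (hl : l ≤ cofinite) (h : LoopBdd P C {1} l) {c : ℝ} (hc : ∀ᶠ s in l, ‖evalM C s‖ ≤ c)
    (hY : Y = W + P * (C * Y + V)) {b : ℝ} (hW : ∀ᶠ s in l, ∀ j, nv ((evalM W s).col j) ≤ b)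
    (hV : ∀ᶠ s in l, ∀ j, nv ((evalM V s).col j) ≤ b) :
    ∃ B : ℝ, ∀ᶠ s in l, ∀ i j, ‖evalC (Y i j) s‖ ≤ B ∧ ‖evalC ((C * Y) i j) s‖ ≤ B := by
  obtain ⟨B, hB⟩ := h
  refine ⟨max (|B| * (b + b)) (|c| * (|B| * (b + b))), ?_⟩
  filter_upwards [hB, hc, hW, hV, hl (evalM_add_cofinite W (P * (C * Y + V))),
    hl (evalM_mul_cofinite P (C * Y + V)), hl (evalM_add_cofinite (C * Y) V),
    hl (evalM_mul_cofinite C Y)] with s h1 h2 h3 h4 h5 h6 h7 h8 i j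
  rw [← hY, h6, h7, h8] at h5
  have hy : (evalM Y s).col j = (evalM W s).col j + ((1 : ℝ) : ℂ) •
      (evalM P s *ᵥ (evalM C s *ᵥ (evalM Y s).col j + (evalM V s).col j)) := by
    rw [Complex.ofReal_one, one_smul]
    conv_lhs => rw [h5]
    ext i
    simp [Matrix.col, Matrix.mul_apply, Matrix.mulVec, dotProduct, Matrix.add_apply]
  have hn := h1 1 rfl _ _ _ hy
  have hn2 : nv ((evalM Y s).col j) ≤ |B| * (b + b) := by
    refine hn.trans ((mul_le_mul_of_nonneg_right (le_abs_self B)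
      (add_nonneg (nv_nonneg _) (nv_nonneg _))).trans ?_)
    exact mul_le_mul_of_nonneg_left (add_le_add (h3 j) (h4 j)) (abs_nonneg B)
  constructor
  · exact ((nv_apply_le ((evalM Y s).col j) i).trans hn2).trans (le_max_left _ _)
  · have h9 : evalC ((C * Y) i j) s = (evalM C s *ᵥ (evalM Y s).col j) i := by
      have : evalC ((C * Y) i j) s = evalM (C * Y) s i j := rfl
      rw [this, h8]
      rfl
    rw [h9]
    refine (nv_apply_le _ i).trans ((nv_mulVec_le _ _).trans (le_trans ?_ (le_max_right _ _)))
    exact mul_le_mul (h2.trans (le_abs_self c)) hn2 (nv_nonneg _) (abs_nonneg c)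

lemma det_ne_zero_of_loop {P C : Matrix (Fin n) (Fin n) (RatFunc ℝ)} {l : Filter ℂ} [l.NeBot]
    (hl : l ≤ cofinite) (h : LoopBdd P C {1} l) : (1 - P * C).det ≠ 0 := by
  intro h0
  obtain ⟨v, hv0, hv⟩ := Matrix.exists_mulVec_eq_zero_iff.2 h0
  obtain ⟨i, hi⟩ := Function.ne_iff.1 hv0
  let V : Matrix (Fin n) (Fin n) (RatFunc ℝ) := Matrix.of fun i _ => v i
  have hV : V = P * (C * V) := by
    rw [Matrix.sub_mulVec, Matrix.one_mulVec, sub_eq_zero] at hv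
    rw [← Matrix.mul_assoc]
    ext i j
    exact congrFun hv i
  obtain ⟨B, hB⟩ := h
  have : ∀ᶠ s in l, False := by
    filter_upwards [hB, hl (evalM_mul_cofinite P (C * V)), hl (evalM_mul_cofinite C V),
      hl (evalC_ne_zero_cofinite (v i) hi)] with s h1 h2 h3 h4
    rw [← hV, h3] at h2
    have := h1 1 rfl ((evalM V s).col i) 0 0 (by
      rw [Complex.ofReal_one, one_smul, zero_add, add_zero]
      conv_lhs => rw [h2]
      ext k
      simp [Matrix.col, Matrix.mul_apply, Matrix.mulVec, dotProduct])
    rw [nv_zero, add_zero, mul_zero] at this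
    have h5 := nv_eq_zero.1 (le_antisymm this (nv_nonneg _))
    exact h4 (congrFun h5 i)
  exact this.exists.elim fun _ h => h

lemma col_bdd_const (W : Matrix (Fin n) (Fin n) ℂ) : ∃ b : ℝ, 0 ≤ b ∧ ∀ j, nv (W.col j) ≤ b := by
  refine ⟨∑ j, nv (W.col j), Finset.sum_nonneg fun _ _ => nv_nonneg _, fun j => ?_⟩
  exact Finset.single_le_sum (f := fun j => nv (W.col j)) (fun _ _ => nv_nonneg _)
    (Finset.mem_univ j)

/-- The closed-loop matrix. -/
def clM (P C : Matrix (Fin n) (Fin n) (RatFunc ℝ)) :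
    Matrix (Fin n ⊕ Fin n) (Fin n ⊕ Fin n) (RatFunc ℝ) :=
  Matrix.fromBlocks
    (1 - P * C)⁻¹ ((1 - P * C)⁻¹ * P)
    (C * (1 - P * C)⁻¹) (C * (1 - P * C)⁻¹ * P)

lemma clM_bdd {P C : Matrix (Fin n) (Fin n) (RatFunc ℝ)} {l : Filter ℂ}
    (hdet : (1 - P * C).det ≠ 0)
    (hl : l ≤ cofinite) (h : LoopBdd P C {1} l) {c : ℝ} (hc : ∀ᶠ s in l, ‖evalM C s‖ ≤ c) :
    ∃ B : ℝ, ∀ᶠ s in l, ∀ i j, ‖evalC (clM P C i j) s‖ ≤ B := by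
  set S := (1 - P * C)⁻¹ with hS
  have hS1 : (1 - P * C) * S = 1 := Matrix.mul_nonsing_inv _ (isUnit_iff_ne_zero.2 hdet)
  have hSe : S = 1 + P * (C * S + 0) := by
    rw [Matrix.sub_mul, Matrix.one_mul, sub_eq_iff_eq_add] at hS1
    rw [add_zero, ← Matrix.mul_assoc]
    exact hS1
  have hTe : S * P = 0 + P * (C * (S * P) + 1) := by
    have : (1 - P * C) * (S * P) = P := by rw [← Matrix.mul_assoc, hS1, Matrix.one_mul]
    rw [Matrix.sub_mul, Matrix.one_mul, sub_eq_iff_eq_add] at this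
    rw [zero_add, Matrix.mul_add, Matrix.mul_one, ← Matrix.mul_assoc, add_comm]
    exact this
  have hz : ∀ s, evalM (0 : Matrix (Fin n) (Fin n) (RatFunc ℝ)) s = 0 := by
    intro s
    ext i j
    simp [evalM, evalC]
  obtain ⟨b, hb0, hb⟩ := col_bdd_const (1 : Matrix (Fin n) (Fin n) ℂ)
  have h1 : ∀ᶠ s in l, ∀ j,
      nv ((evalM (1 : Matrix (Fin n) (Fin n) (RatFunc ℝ)) s).col j) ≤ b :=
    Eventually.of_forall fun s j => by
      rw [evalM_one]
      exact hb j
  have h0 : ∀ᶠ s in l, ∀ j,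
      nv ((evalM (0 : Matrix (Fin n) (Fin n) (RatFunc ℝ)) s).col j) ≤ b :=
    Eventually.of_forall fun s j => by
      rw [hz]
      have : (0 : Matrix (Fin n) (Fin n) ℂ).col j = 0 := rfl
      rw [this, nv_zero]
      exact hb0
  obtain ⟨B1, hB1⟩ := entry_bdd_of_loop hl h hc hSe h1 h0
  obtain ⟨B2, hB2⟩ := entry_bdd_of_loop hl h hc hTe h0 h1
  refine ⟨max B1 B2, ?_⟩
  filter_upwards [hB1, hB2] with s h1 h2
  rintro (i | i) (j | j)
  · exact (h1 i j).1.trans (le_max_left _ _)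
  · exact (h2 i j).1.trans (le_max_right _ _)
  · exact (h1 i j).2.trans (le_max_left _ _)
  · have := (h2 i j).2.trans (le_max_right B1 B2)
    rw [← Matrix.mul_assoc] at this
    exact this

/-- sufficient eigenvalue conditions for feedback stability. -/
theorem feedback_stability_sufficient {n : ℕ} (P C : Matrix (Fin n) (Fin n) (RatFunc ℝ))
    (hP : IsNI P) (hP0 : ¬ HasPole P 0) (hC : IsSNI C)
    (hsgn : (evalInf P).PosSemidef ∨ (evalInf C).PosSemidef)
    (h0 : maxEigLT (evalR P 0 * evalR C 0) 1)
    (hinf : maxEigLT (evalInf P * evalInf C) 1) :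
    FeedbackStable P C := by
  have hCnp : ∀ s : ℂ, 0 ≤ s.re → ¬ HasPole C s := by
    rintro s hs ⟨i, j, h⟩
    exact hC.1.2 s hs i j h
  have hmap : ∀ A B : Matrix (Fin n) (Fin n) ℝ, (A * B).map Complex.ofReal =
      A.map Complex.ofReal * B.map Complex.ofReal := by
    intro A B
    ext i j
    simp [Matrix.mul_apply]
  -- values at zero and infinity
  have hd0 : ∀ τ ∈ Set.Icc (0 : ℝ) 1, (1 - (τ : ℂ) • (evalM P 0 * evalM C 0)).det ≠ 0 := by
    apply det_ne_zero_of_eigs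
    rw [evalM_zero_eq, evalM_zero_eq, ← hmap]
    exact h0
  have hdi : ∀ τ ∈ Set.Icc (0 : ℝ) 1, (1 - (τ : ℂ) •
      ((evalInf P).map Complex.ofReal * (evalInf C).map Complex.ofReal)).det ≠ 0 := by
    apply det_ne_zero_of_eigs
    rw [← hmap]
    exact hinf
  have tP0 := evalM_tendsto hP0
  have tC0 := evalM_tendsto (hCnp 0 (by simp))
  have tPi := evalM_tendsto_inf hP.1
  have tCi := evalM_tendsto_inf (G := C) hC.1.1
  have hone : (1 : ℝ) ∈ Set.Icc (0 : ℝ) 1 := ⟨zero_le_one, le_rfl⟩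
  -- homotopy
  have hginf := good_of_tendsto (tPi.mul tCi) hdi
  have hg0 := good_of_tendsto (tP0.mul tC0) hd0
  have haxp : ∀ ω : ℝ, 0 < ω → ∀ᶠ s in 𝓝 (jw ω), 0 < s.re → Good P C s := by
    intro ω hω
    obtain ⟨B, hB⟩ := loopBdd_axis hP hC hω
    rw [Filter.eventually_inf_principal, eventually_nhdsWithin_iff] at hB
    filter_upwards [hB] with s hs hre
    refine good_of_loop (hs ?_ hre.le)
    intro h
    rw [Set.mem_singleton_iff] at h
    rw [h] at hre
    simp [jw] at hre
  have hconj : ∀ ω : ℝ, (starRingEnd ℂ) (jw ω) = jw (-ω) := by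
    intro ω
    simp [jw]
  have hax : ∀ ω : ℝ, ∀ᶠ s in 𝓝 (jw ω), 0 < s.re → Good P C s := by
    intro ω
    rcases lt_trichotomy ω 0 with h | h | h
    · have h1 := haxp (-ω) (by linarith)
      have h2 : Tendsto (starRingEnd ℂ) (𝓝 (jw ω)) (𝓝 (jw (-ω))) := by
        rw [← hconj]
        exact Complex.continuous_conj.tendsto _
      filter_upwards [h2.eventually h1] with s hs hre
      have := good_conj (hs (by simpa using hre))
      rwa [Complex.conj_conj] at this
    · subst h
      have : jw 0 = 0 := by simp [jw]
      rw [this]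
      filter_upwards [hg0] with s hs _
      exact hs
    · exact haxp ω h
  have hrhp := good_rhp hP.2.1 (fun s hs => hCnp s hs.le) hginf hax
  -- well-posedness
  have hli : LoopBdd P C {1} (Bornology.cobounded ℂ) :=
    loopBdd_regular tPi tCi (by simpa using hdi 1 hone)
  have hdet := det_ne_zero_of_loop (Bornology.le_cofinite ℂ) hli
  refine ⟨hdet, ?_⟩
  change MemRHinf (clM P C)
  refine ⟨fun i j => ?_, ?_⟩
  · obtain ⟨c, -, hc⟩ := exists_norm_bound tCi
    obtain ⟨B, hB⟩ := clM_bdd hdet (Bornology.le_cofinite ℂ) hli hc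
    exact proper_of_bdd _ B (hB.mono fun s hs => hs i j)
  · -- regular points
    have hreg : ∀ s : ℂ, ¬ HasPole P s → ¬ HasPole C s → Good P C s →
        ∀ i j, ¬ IsPoleAt (clM P C i j) s := by
      intro s hp hc hg i j
      have tP := (evalM_tendsto hp).mono_left (nhdsWithin_le_nhds (s := {s}ᶜ))
      have tC := (evalM_tendsto hc).mono_left (nhdsWithin_le_nhds (s := {s}ᶜ))
      have hl := loopBdd_regular tP tC (by simpa [NIControl.hdet] using hg 1 hone)
      obtain ⟨c, -, hc⟩ := exists_norm_bound tC
      obtain ⟨B, hB⟩ := clM_bdd hdet (nhdsNE_le_cofinite s) hl hc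
      exact not_pole_of_bdd _ s _ le_rfl B (hB.mono fun s hs => hs i j)
    have haxis : ∀ ω : ℝ, 0 < ω → ∀ i j, ¬ IsPoleAt (clM P C i j) (jw ω) := by
      intro ω hω i j
      let l : Filter ℂ := 𝓝[≠] (jw ω) ⊓ 𝓟 {s | 0 ≤ s.re}
      have hle : l ≤ 𝓝[≠] (jw ω) := inf_le_left
      obtain ⟨B0, hB0⟩ := loopBdd_axis hP hC hω
      have hl : LoopBdd P C {1} l := ⟨B0, hB0.mono fun s hs τ hτ => hs τ (by
        rw [Set.mem_singleton_iff] at hτ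
        rw [hτ]
        exact hone)⟩
      have hne : l.NeBot := by
        have ht : Tendsto (fun t : ℝ => jw ω + (t : ℂ)) (𝓝[>] 0) l := by
          refine tendsto_inf.2 ⟨?_, ?_⟩
          · apply tendsto_nhdsWithin_of_tendsto_nhds_of_eventually_within
            · have hcont : Continuous (fun t : ℝ => jw ω + (t : ℂ)) := by fun_prop
              have := hcont.tendsto 0
              simp only [Complex.ofReal_zero, add_zero] at this
              exact this.mono_left nhdsWithin_le_nhds
            · filter_upwards [self_mem_nhdsWithin] with t ht h
              have ht' : (0 : ℝ) < t := ht
              have : (t : ℂ) = 0 := by simpa using h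
              exact ht'.ne' (by exact_mod_cast this)
          · rw [tendsto_principal]
            filter_upwards [self_mem_nhdsWithin] with t ht
            have ht' : (0 : ℝ) < t := ht
            simpa [jw] using ht'.le
        exact ht.neBot
      have tC := (evalM_tendsto (hCnp (jw ω) (by simp [jw]))).mono_left
        (hle.trans nhdsWithin_le_nhds)
      obtain ⟨c, -, hc⟩ := exists_norm_bound tC
      obtain ⟨B, hB⟩ := clM_bdd hdet (hle.trans (nhdsNE_le_cofinite _)) hl hc
      exact not_pole_of_bdd _ _ l hle B (hB.mono fun s hs => hs i j)
    intro s hs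
    rcases hs.lt_or_eq with hs | hs
    · exact hreg s (hP.2.1 s hs) (hCnp s hs.le) (hrhp s hs)
    · have hsj : s = jw s.im := by
        apply Complex.ext <;> simp [jw, ← hs]
      rcases lt_trichotomy s.im 0 with h | h | h
      · intro i j
        rw [← isPoleAt_conj, hsj, hconj]
        exact haxis _ (by linarith) i j
      · have : s = 0 := by
          rw [hsj, h]
          simp [jw]
        rw [this]
        exact hreg 0 hP0 (hCnp 0 (by simp)) hg0.self_of_nhds
      · rw [hsj]
        exact haxis _ h

end NIControl
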